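/- Let S = ⟨S, δ, L⟩ and S' = ⟨S', δ', L'⟩ be image-finite FLTSs. Then the relation Z = {(x,x') ∈ S × S' | φ^S(x) ≤ φ^S'(x') for all formulas φ of fposΔK} is the largest crisp directed simulation between S and S' (i.e., Z is a directed simulation and every directed simulation between S and S' is contained in Z). -/

import Mathlib

open unitInterval

noncomputable section
attribute [local instance] Classical.propDecidable

instance : Fact ((0:ℝ) ≤ 1) := ⟨zero_le_one⟩

/-- A left-continuous t-norm on the unit interval `[0,1]`: a commutative, associative
binary operation with neutral element `1`, increasing in both arguments, that
distributes over suprema of nonempty sets (left-continuity). -/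
structure Tnorm where
  mul : I → I → I
  mul_comm : ∀ x y, mul x y = mul y x
  mul_assoc : ∀ x y z, mul (mul x y) z = mul x (mul y z)
  mul_one : ∀ x, mul x 1 = x
  mul_le_mul : ∀ {a b c d : I}, a ≤ b → c ≤ d → mul a c ≤ mul b d
  left_continuous : ∀ (x : I) (s : Set I), s.Nonempty → mul x (sSup s) = sSup (mul x '' s)

/-- The residuum of a t-norm: `(x ⇒ y) = sup {z | z ⊗ x ≤ y}`. -/
def Tnorm.res (T : Tnorm) (x y : I) : I := sSup {z : I | T.mul z x ≤ y}

/-- A fuzzy labeled transition system over actions `A`, propositions `P`, states `St`. -/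
structure FLTS (A P St : Type) where
  delta : St → A → St → I
  label : St → P → I

/-- A crisp directed simulation between two FLTSs. -/
def IsDirSimulation {A P S S' : Type} (M : FLTS A P S) (M' : FLTS A P S')
    (Z : S → S' → Prop) : Prop :=
  (∀ x x', Z x x' → ∀ p, M.label x p ≤ M'.label x' p) ∧
  (∀ x y x' (ρ : A), Z x x' → 0 < M.delta x ρ y →
    ∃ y', M.delta x ρ y ≤ M'.delta x' ρ y' ∧ Z y y') ∧
  (∀ x x' y' (ρ : A), Z x x' → 0 < M'.delta x' ρ y' →
    ∃ y, M'.delta x' ρ y' ≤ M.delta x ρ y ∧ Z y y')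

/-- Formulas of fposΔK. -/
inductive PKForm (A P : Type) : Type
  | const : I → PKForm A P
  | prop : P → PKForm A P
  | baaz : PKForm A P → PKForm A P
  | and : PKForm A P → PKForm A P → PKForm A P
  | or : PKForm A P → PKForm A P → PKForm A P
  | impl : I → PKForm A P → PKForm A P
  | box : A → PKForm A P → PKForm A P
  | dia : A → PKForm A P → PKForm A P

/-- Semantics of fposΔK formulas. -/
def pkSem (T : Tnorm) {A P St : Type} (M : FLTS A P St) : PKForm A P → St → I
  | .const a, _ => a
  | .prop p, x => M.label x p
  | .baaz φ, x => if pkSem T M φ x = 1 then 1 else 0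
  | .and φ ψ, x => min (pkSem T M φ x) (pkSem T M ψ x)
  | .or φ ψ, x => max (pkSem T M φ x) (pkSem T M ψ x)
  | .impl a φ, x => T.res a (pkSem T M φ x)
  | .box ρ φ, x => ⨅ y, T.res (M.delta x ρ y) (pkSem T M φ y)
  | .dia ρ φ, x => ⨆ y, T.mul (M.delta x ρ y) (pkSem T M φ y)

/-- An FLTS is image-finite if every state has finitely many positive successors
for each action. -/
def ImageFinite {A P St : Type} (M : FLTS A P St) : Prop :=
  ∀ (x : St) (ρ : A), {y : St | 0 < M.delta x ρ y}.Finite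

/-!
Along a directed simulation no formula loses truth value, by induction on the formula.
Conversely, suppose `φ^S(y) > φ^S'(y')`. With `a = φ^S(y)`, the formula `Δ(a → φ)` is `1` at `y` and
`0` at `y'`, so image-finiteness lets finite conjunctions and disjunctions of such formulas separate
`y` from all successors of `x'` of degree at least `d = δ(x,ϱ,y) > 0`, and dually. As only finitely
many degrees are positive, those below `d` are bounded by some `c < d`. A failure of the forth
condition at `y` is then refuted by a formula `⟨ϱ⟩χ`, and one of the back condition by a formula
`[ϱ](χ ∨ c)`.
-/

theorem exists_lt_forall_lt_imp_le {ι α : Type*} [LinearOrder α] [OrderBot α] {f : ι → α}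
    (hf : {i | ⊥ < f i}.Finite) {d : α} (hd : ⊥ < d) : ∃ c < d, ∀ i, f i < d → f i ≤ c := by
  have hfin : {i | ⊥ < f i ∧ f i < d}.Finite := hf.subset fun _ hi => hi.1
  refine ⟨hfin.toFinset.sup f, (Finset.sup_lt_iff hd).2 fun i hi => (hfin.mem_toFinset.1 hi).2,
    fun i hi => ?_⟩
  rcases eq_bot_or_bot_lt (f i) with hbot | hpos
  · exact hbot.trans_le bot_le
  · exact Finset.le_sup (hfin.mem_toFinset.2 ⟨hpos, hi⟩)

namespace Tnorm

variable (T : Tnorm)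

protected theorem mul_zero (x : I) : T.mul x 0 = 0 := by
  refine le_antisymm ?_ unitInterval.nonneg'
  calc T.mul x 0 ≤ T.mul 1 0 := T.mul_le_mul unitInterval.le_one' le_rfl
    _ = 0 := by rw [T.mul_comm, T.mul_one]

protected theorem zero_mul (x : I) : T.mul 0 x = 0 := by
  rw [T.mul_comm, T.mul_zero]

theorem mul_le_left (x y : I) : T.mul x y ≤ x :=
  (T.mul_le_mul le_rfl unitInterval.le_one').trans_eq (T.mul_one x)

theorem le_res_iff {x y z : I} : z ≤ T.res x y ↔ T.mul z x ≤ y := by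
  refine ⟨fun h => ?_, fun h => le_sSup h⟩
  have hne : {w : I | T.mul w x ≤ y}.Nonempty :=
    ⟨0, (T.zero_mul x).trans_le unitInterval.nonneg'⟩
  calc T.mul z x ≤ T.mul (T.res x y) x := T.mul_le_mul h le_rfl
    _ = sSup (T.mul x '' {w : I | T.mul w x ≤ y}) := by
      rw [T.mul_comm, res, T.left_continuous x _ hne]
    _ ≤ y := sSup_le <| Set.forall_mem_image.2 fun w hw => (T.mul_comm x w).trans_le hw

theorem res_eq_one_iff {x y : I} : T.res x y = 1 ↔ x ≤ y := by
  rw [← unitInterval.le_one'.ge_iff_eq, T.le_res_iff, T.mul_comm, T.mul_one]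

theorem res_le_res_right (x : I) {y z : I} (h : y ≤ z) : T.res x y ≤ T.res x z :=
  T.le_res_iff.2 <| (T.le_res_iff.1 le_rfl).trans h

end Tnorm

namespace PKForm

variable {A P : Type} {ι : Type*}

instance : Inhabited (PKForm A P) := ⟨.const 0⟩

/-- The finite disjunction `⋁_{i ∈ s} φ i`, nested in an arbitrarily chosen order of `s`;
the empty disjunction is the constant `0`. -/
def disj (s : Finset ι) (φ : ι → PKForm A P) : PKForm A P :=
  (s.toList.map φ).foldr .or (.const 0)

/-- The finite conjunction `⋀_{i ∈ s} φ i`, nested in an arbitrarily chosen order of `s`;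
the empty conjunction is the constant `1`. -/
def conj (s : Finset ι) (φ : ι → PKForm A P) : PKForm A P :=
  (s.toList.map φ).foldr .and (.const 1)

end PKForm

section Semantics

variable {A P St : Type} {ι : Type*} (T : Tnorm) (M : FLTS A P St)

theorem pkSem_disj (s : Finset ι) (φ : ι → PKForm A P) (x : St) :
    pkSem T M (.disj s φ) x = s.sup fun i => pkSem T M (φ i) x := by
  rw [Finset.sup_def, ← Finset.coe_toList, Multiset.map_coe, Multiset.sup_coe, PKForm.disj]
  induction s.toList with
  | nil => rfl
  | cons i l ih => exact congrArg (max _) ih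

theorem pkSem_conj (s : Finset ι) (φ : ι → PKForm A P) (x : St) :
    pkSem T M (.conj s φ) x = s.inf fun i => pkSem T M (φ i) x := by
  rw [Finset.inf_def, ← Finset.coe_toList, Multiset.map_coe, Multiset.inf_coe, PKForm.conj]
  induction s.toList with
  | nil => rfl
  | cons i l ih => exact congrArg (min _) ih

variable {T M} {ρ : A} {φ : PKForm A P} {x : St} {a : I}

theorem le_pkSem_box_iff :
    a ≤ pkSem T M (.box ρ φ) x ↔ ∀ y, T.mul a (M.delta x ρ y) ≤ pkSem T M φ y := by
  simp only [pkSem, le_iInf_iff, T.le_res_iff]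

theorem pkSem_dia_le_iff :
    pkSem T M (.dia ρ φ) x ≤ a ↔ ∀ y, T.mul (M.delta x ρ y) (pkSem T M φ y) ≤ a := by
  simp only [pkSem, iSup_le_iff]

theorem pkSem_box_eq_one_iff :
    pkSem T M (.box ρ φ) x = 1 ↔ ∀ y, M.delta x ρ y ≤ pkSem T M φ y := by
  simp only [← unitInterval.le_one'.ge_iff_eq, le_pkSem_box_iff, T.mul_comm 1, T.mul_one]

end Semantics

theorem ImageFinite.finite_le_delta {A P St : Type} {M : FLTS A P St} (hM : ImageFinite M)
    (x : St) (ρ : A) {d : I} (hd : 0 < d) : {y | d ≤ M.delta x ρ y}.Finite :=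
  (hM x ρ).subset fun _ hy => hd.trans_le hy

/-- The relation `Z` of the paper: every formula of fposΔK has at `x'` at least the truth value
it has at `x`. -/
def FposLE {A P S S' : Type} (T : Tnorm) (M : FLTS A P S) (M' : FLTS A P S') (x : S) (x' : S') :
    Prop :=
  ∀ φ : PKForm A P, pkSem T M φ x ≤ pkSem T M' φ x'

section Simulation

variable {A P S S' : Type} {T : Tnorm} {M : FLTS A P S} {M' : FLTS A P S'}

theorem exists_pkSem_eq_one_and_eq_zero {x : S} {x' : S'} (h : ¬FposLE T M M' x x') :
    ∃ φ : PKForm A P, pkSem T M φ x = 1 ∧ pkSem T M' φ x' = 0 := by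
  obtain ⟨φ, hφ⟩ := not_forall.1 h
  exact ⟨.baaz (.impl (pkSem T M φ x) φ), if_pos (T.res_eq_one_iff.2 le_rfl),
    if_neg fun h1 => hφ (T.res_eq_one_iff.1 h1)⟩

theorem exists_pkSem_eq_one_and_forall_eq_zero {y : S} {s : Set S'} (hs : s.Finite)
    (h : ∀ y' ∈ s, ¬FposLE T M M' y y') :
    ∃ χ : PKForm A P, pkSem T M χ y = 1 ∧ ∀ y' ∈ s, pkSem T M' χ y' = 0 := by
  choose! φ hφ hφ' using fun y' hy' => exists_pkSem_eq_one_and_eq_zero (h y' hy')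
  refine ⟨.conj hs.toFinset φ, ?_, fun y' hy' => ?_⟩
  · rw [pkSem_conj]
    exact (Finset.inf_eq_top_iff _ _).2 fun y' hy' => hφ y' (hs.mem_toFinset.1 hy')
  · rw [pkSem_conj]
    exact le_antisymm ((Finset.inf_le (hs.mem_toFinset.2 hy')).trans_eq (hφ' y' hy'))
      unitInterval.nonneg'

theorem exists_forall_pkSem_eq_one_and_eq_zero {s : Set S} (hs : s.Finite) {y' : S'}
    (h : ∀ y ∈ s, ¬FposLE T M M' y y') :
    ∃ χ : PKForm A P, (∀ y ∈ s, pkSem T M χ y = 1) ∧ pkSem T M' χ y' = 0 := by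
  choose! φ hφ hφ' using fun y hy => exists_pkSem_eq_one_and_eq_zero (h y hy)
  refine ⟨.disj hs.toFinset φ, fun y hy => ?_, ?_⟩
  · rw [pkSem_disj]
    exact le_antisymm unitInterval.le_one' ((hφ y hy).ge.trans
      (Finset.le_sup (f := fun z => pkSem T M (φ z) y) (hs.mem_toFinset.2 hy)))
  · rw [pkSem_disj]
    exact (Finset.sup_eq_bot_iff _ _).2 fun y hy => hφ' y (hs.mem_toFinset.1 hy)

namespace FposLE

variable {x : S} {x' : S'} {ρ : A}

theorem exists_delta_le (hM' : ImageFinite M') (h : FposLE T M M' x x') {y : S}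
    (hd : 0 < M.delta x ρ y) :
    ∃ y', M.delta x ρ y ≤ M'.delta x' ρ y' ∧ FposLE T M M' y y' := by
  by_contra! hsep
  obtain ⟨χ, hχ, hχ'⟩ :=
    exists_pkSem_eq_one_and_forall_eq_zero (hM'.finite_le_delta x' ρ hd) hsep
  obtain ⟨c, hcd, hc⟩ := exists_lt_forall_lt_imp_le (hM' x' ρ) hd
  have hdia' : pkSem T M' (.dia ρ χ) x' ≤ c := pkSem_dia_le_iff.2 fun z => by
    rcases le_or_gt (M.delta x ρ y) (M'.delta x' ρ z) with hz | hz
    · rw [hχ' z hz, T.mul_zero]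
      exact unitInterval.nonneg'
    · exact (T.mul_le_left _ _).trans (hc z hz)
  have hdia : M.delta x ρ y ≤ pkSem T M (.dia ρ χ) x := calc
    M.delta x ρ y = T.mul (M.delta x ρ y) (pkSem T M χ y) := by rw [hχ, T.mul_one]
    _ ≤ pkSem T M (.dia ρ χ) x := pkSem_dia_le_iff.1 le_rfl y
  exact hcd.not_ge (hdia.trans ((h _).trans hdia'))

theorem exists_delta_ge (hM : ImageFinite M) (h : FposLE T M M' x x') {y' : S'}
    (hd : 0 < M'.delta x' ρ y') :
    ∃ y, M'.delta x' ρ y' ≤ M.delta x ρ y ∧ FposLE T M M' y y' := by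
  by_contra! hsep
  obtain ⟨χ, hχ, hχ'⟩ :=
    exists_forall_pkSem_eq_one_and_eq_zero (hM.finite_le_delta x ρ hd) hsep
  obtain ⟨c, hcd, hc⟩ := exists_lt_forall_lt_imp_le (hM x ρ) hd
  have hbox : pkSem T M (.box ρ (.or χ (.const c))) x = 1 := pkSem_box_eq_one_iff.2 fun z => by
    rcases le_or_gt (M'.delta x' ρ y') (M.delta x ρ z) with hz | hz
    · exact le_max_of_le_left (unitInterval.le_one'.trans_eq (hχ z hz).symm)
    · exact le_max_of_le_right (hc z hz)
  have hbox' : pkSem T M' (.box ρ (.or χ (.const c))) x' = 1 :=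
    le_antisymm unitInterval.le_one' (hbox.symm.trans_le (h _))
  have hdc : M'.delta x' ρ y' ≤ c := calc
    M'.delta x' ρ y' ≤ max (pkSem T M' χ y') c := pkSem_box_eq_one_iff.1 hbox' y'
    _ = c := by rw [hχ', max_eq_right unitInterval.nonneg']
  exact hcd.not_ge hdc

theorem isDirSimulation (hM : ImageFinite M) (hM' : ImageFinite M') :
    IsDirSimulation M M' (FposLE T M M') :=
  ⟨fun _ _ h p => h (.prop p), fun _ _ _ _ h hd => h.exists_delta_le hM' hd,
    fun _ _ _ _ h hd => h.exists_delta_ge hM hd⟩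

end FposLE

namespace IsDirSimulation

variable {Z : S → S' → Prop} {φ : PKForm A P} {x : S} {x' : S'}

theorem pkSem_box_le (hZ : IsDirSimulation M M' Z)
    (hφ : ∀ y y', Z y y' → pkSem T M φ y ≤ pkSem T M' φ y') (h : Z x x') (ρ : A) :
    pkSem T M (.box ρ φ) x ≤ pkSem T M' (.box ρ φ) x' := by
  refine le_pkSem_box_iff.2 fun y' => ?_
  rcases (unitInterval.nonneg' (t := M'.delta x' ρ y')).eq_or_lt with h0 | hpos
  · rw [← h0, T.mul_zero]
    exact unitInterval.nonneg'
  · obtain ⟨y, hle, hy⟩ := hZ.2.2 x x' y' ρ h hpos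
    calc T.mul (pkSem T M (.box ρ φ) x) (M'.delta x' ρ y')
      _ ≤ T.mul (pkSem T M (.box ρ φ) x) (M.delta x ρ y) := T.mul_le_mul le_rfl hle
      _ ≤ pkSem T M φ y := le_pkSem_box_iff.1 le_rfl y
      _ ≤ pkSem T M' φ y' := hφ y y' hy

theorem pkSem_dia_le (hZ : IsDirSimulation M M' Z)
    (hφ : ∀ y y', Z y y' → pkSem T M φ y ≤ pkSem T M' φ y') (h : Z x x') (ρ : A) :
    pkSem T M (.dia ρ φ) x ≤ pkSem T M' (.dia ρ φ) x' := by
  refine pkSem_dia_le_iff.2 fun y => ?_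
  rcases (unitInterval.nonneg' (t := M.delta x ρ y)).eq_or_lt with h0 | hpos
  · rw [← h0, T.zero_mul]
    exact unitInterval.nonneg'
  · obtain ⟨y', hle, hy⟩ := hZ.2.1 x y x' ρ h hpos
    calc T.mul (M.delta x ρ y) (pkSem T M φ y)
      _ ≤ T.mul (M'.delta x' ρ y') (pkSem T M' φ y') := T.mul_le_mul hle (hφ y y' hy)
      _ ≤ pkSem T M' (.dia ρ φ) x' := pkSem_dia_le_iff.1 le_rfl y'

theorem fposLE (hZ : IsDirSimulation M M' Z) (h : Z x x') : FposLE T M M' x x' := by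
  intro φ
  induction φ generalizing x x' with
  | const a => exact le_rfl
  | prop p => exact hZ.1 x x' h p
  | baaz φ ih =>
    by_cases h1 : pkSem T M φ x = 1
    · have h1' : pkSem T M' φ x' = 1 := le_antisymm unitInterval.le_one' (h1.symm.trans_le (ih h))
      simp only [pkSem, h1, h1', le_rfl]
    · simp only [pkSem, if_neg h1, unitInterval.nonneg']
  | and φ ψ ihφ ihψ => exact min_le_min (ihφ h) (ihψ h)
  | or φ ψ ihφ ihψ => exact max_le_max (ihφ h) (ihψ h)
  | impl a φ ih => exact T.res_le_res_right a (ih h)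
  | box ρ φ ih => exact hZ.pkSem_box_le (fun _ _ => ih) h ρ
  | dia ρ φ ih => exact hZ.pkSem_dia_le (fun _ _ => ih) h ρ

end IsDirSimulation

end Simulation

/-- Hennessy-Milner property of crisp directed simulations: for image-finite FLTSs,
the relation consisting of the pairs `(x,x')` with `φ^S(x) ≤ φ^S'(x')` for all
fposΔK formulas `φ` is the largest crisp directed simulation. -/
theorem hennessyMilner_dirSimulation_fposK
    {A P S S' : Type} [Nonempty A] [Nonempty P] [Nonempty S] [Nonempty S']
    (T : Tnorm) (M : FLTS A P S) (M' : FLTS A P S')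
    (hM : ImageFinite M) (hM' : ImageFinite M') :
    IsDirSimulation M M' (fun x x' => ∀ φ : PKForm A P, pkSem T M φ x ≤ pkSem T M' φ x') ∧
    (∀ Z : S → S' → Prop, IsDirSimulation M M' Z →
      ∀ x x', Z x x' → ∀ φ : PKForm A P, pkSem T M φ x ≤ pkSem T M' φ x') := by
  exact ⟨FposLE.isDirSimulation hM hM', fun _ hZ _ _ h => hZ.fposLE h⟩
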